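/- For every n, the map ρ_n sending a parking function π of length n to its parking tree PT(π) is a bijection from the set of parking functions of length n onto the set of Cayley trees labelled with [n]_0, its inverse is the map sending a Cayley tree T to its preference sequence π_T, and ρ_n is record-preserving: Rec(π) = Rec(PT(π)) for every parking function π of length n. -/

import Mathlib

/-!
Call a listing `ω 0 = 0, ω 1, …, ω n` of the vertices of a tree a priority order if every parent is
listed before its child and everything listed strictly between them is smaller than the child.

* At each step of a priority-first search, a vertex is available exactly when its parent is listed
  and it is not. So the search produces a priority order, and it is the only one: a vertex
  available when `u` is listed is either `u` or listed later, and is then larger than `u`.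
* Park the cars according to the preferences `π c = ω⁻¹ (f c) + 1`. The spots that car `c` passes
  over before reaching `ω⁻¹ c` must hold smaller, hence earlier, cars; this is again the condition
  on `ω`. So the bird's-eye permutation is a priority order of the parking tree, and every
  priority order is the bird's-eye permutation of its preferences.

By uniqueness, the weary permutation of `PT(π)` is the bird's-eye permutation of `π`, and the two
maps are mutually inverse.

Record preservation holds along any priority order. Ancestors are listed earlier, so a
left-to-right maximum exceeds its ancestors. Conversely, the positions of the ancestors of `v` cut
those before `v` into intervals, and every entry of an interval is bounded by its right end,
which is `v` or an ancestor of `v`.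
-/

open scoped Classical

namespace WearyParking

/-- `f` is the parent function of a Cayley tree on `{0,…,n}` rooted at `0`:
`f 0 = 0`, `f` is pinned to `0` outside `{1,…,n}`, `f` maps `{1,…,n}` into `{0,…,n}`,
and every vertex reaches the root under iteration. -/
def IsCayleyTree (n : ℕ) (f : ℕ → ℕ) : Prop :=
  f 0 = 0 ∧ (∀ i, n < i → f i = 0) ∧
  (∀ i, 1 ≤ i → i ≤ n → f i ≤ n) ∧
  (∀ i, 1 ≤ i → i ≤ n → ∃ k, f^[k] i = 0)

/-- A non-root vertex `i` is a record of the tree if it is greater than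
all of its ancestors. -/
def IsRecord (n : ℕ) (f : ℕ → ℕ) (i : ℕ) : Prop :=
  1 ≤ i ∧ i ≤ n ∧ ∀ k, 1 ≤ k → f^[k] i < i

/-- The smallest record larger than `i`. -/
noncomputable def nextRecord (n : ℕ) (f : ℕ → ℕ) (i : ℕ) : ℕ :=
  sInf {j | IsRecord n f j ∧ i < j}

/-- The record (blob) code of the tree, a function on `{1,…,n-1}`:
at a non-record position it records the parent, and at a record position it
records the parent of the next record. -/
noncomputable def blob (n : ℕ) (f : ℕ → ℕ) (i : ℕ) : ℕ :=
  if IsRecord n f i then f (nextRecord n f i) else f i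

/-- Number of children of vertex `v` in the tree. -/
def numChildren (n : ℕ) (f : ℕ → ℕ) (v : ℕ) : ℕ :=
  ((Finset.Icc 1 n).filter fun i => f i = v).card

/-- The list of the first `i+1` vertices visited by the priority-first search:
start at the root `0`; at each step visit the smallest unvisited vertex whose
parent has been visited. -/
noncomputable def wearyList (n : ℕ) (f : ℕ → ℕ) : ℕ → List ℕ
  | 0 => [0]
  | (i + 1) =>
      wearyList n f i ++
        [sInf {v | 1 ≤ v ∧ v ≤ n ∧ v ∉ wearyList n f i ∧ f v ∈ wearyList n f i}]

/-- The weary permutation of the tree: `weary n f i` is the `i`-th vertex visited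
by the priority-first search (with `weary n f 0 = 0`). -/
noncomputable def weary (n : ℕ) (f : ℕ → ℕ) (i : ℕ) : ℕ :=
  (wearyList n f n).getD i 0

/-- The inverse of the weary permutation. -/
noncomputable def wearyInv (n : ℕ) (f : ℕ → ℕ) (v : ℕ) : ℕ :=
  sInf {i | weary n f i = v}

/-- The preference sequence `π_T` of the tree: `π_T i = ω_T⁻¹ (f_T i) + 1`. -/
noncomputable def pref (n : ℕ) (f : ℕ → ℕ) (i : ℕ) : ℕ :=
  wearyInv n f (f i) + 1

/-- Parent function of the priority tree `pt(T)`: `ω_T⁻¹ ∘ f_T ∘ ω_T`. -/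
noncomputable def prioParent (n : ℕ) (f : ℕ → ℕ) (i : ℕ) : ℕ :=
  wearyInv n f (f (weary n f i))

/-- The list of spots occupied by cars `1,…,c` in the classical parking process:
car `c` parks at the first spot `≥ π c` not occupied by an earlier car. -/
noncomputable def spotList (π : ℕ → ℕ) : ℕ → List ℕ
  | 0 => []
  | (c + 1) => spotList π c ++ [sInf {s | π (c + 1) ≤ s ∧ s ∉ spotList π c}]

/-- The spot where car `c` ends up in the classical parking process. -/
noncomputable def spot (π : ℕ → ℕ) (c : ℕ) : ℕ :=
  (spotList π c).getD (c - 1) 0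

/-- `π` is a parking function of length `n`: preferences lie in `{1,…,n}`
(pinned to `1` outside `{1,…,n}`) and every car parks within the `n` spots. -/
def IsParkingFun (n : ℕ) (π : ℕ → ℕ) : Prop :=
  (∀ c, 1 ≤ c → c ≤ n → 1 ≤ π c ∧ π c ≤ n) ∧
  (∀ c, c = 0 ∨ n < c → π c = 1) ∧
  (∀ c, 1 ≤ c → c ≤ n → spot π c ≤ n)

/-- The bird's-eye permutation `ω_π`: the car parked at spot `i` (and `0` at `0`). -/
noncomputable def birdsEye (n : ℕ) (π : ℕ → ℕ) (i : ℕ) : ℕ :=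
  if i = 0 then 0 else sInf {c | 1 ≤ c ∧ c ≤ n ∧ spot π c = i}

/-- The inverse of the bird's-eye permutation. -/
noncomputable def birdsEyeInv (n : ℕ) (π : ℕ → ℕ) (c : ℕ) : ℕ :=
  sInf {i | birdsEye n π i = c}

/-- Parent function of the parking tree `PT(π)`: `f_π i = ω_π (π i - 1)`. -/
noncomputable def ptParent (n : ℕ) (π : ℕ → ℕ) (i : ℕ) : ℕ :=
  if 1 ≤ i ∧ i ≤ n then birdsEye n π (π i - 1) else 0

/-- `v` is a record of the parking function `π`, i.e. a left-to-right maximum of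
the word `ω_π(1) ω_π(2) ⋯ ω_π(n)`. -/
def IsPfRecord (n : ℕ) (π : ℕ → ℕ) (v : ℕ) : Prop :=
  ∃ i, 1 ≤ i ∧ i ≤ n ∧ birdsEye n π i = v ∧ ∀ j, 1 ≤ j → j < i → birdsEye n π j < v

/-- The waiting time of the tree: `wait T = Σ_{i=1}^n (i - f_{pt(T)}(i))`. -/
noncomputable def wait (n : ℕ) (f : ℕ → ℕ) : ℕ :=
  ∑ i ∈ Finset.Icc 1 n, (i - prioParent n f i)

/-- The number of priority small ascents of the tree. -/
noncomputable def psa (n : ℕ) (f : ℕ → ℕ) : ℕ :=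
  ((Finset.Icc 1 n).filter fun i => prioParent n f i = i - 1).card

/-- The number of children of the root. -/
def degRoot (n : ℕ) (f : ℕ → ℕ) : ℕ := numChildren n f 0

/-- The children sequence: `chseq n f j` is the number of vertices with exactly
`j` children. -/
def chseq (n : ℕ) (f : ℕ → ℕ) (j : ℕ) : ℕ :=
  ((Finset.Icc 0 n).filter fun v => numChildren n f v = j).card

/-- The number of probes of the parking function: `n` plus the total displacement. -/
noncomputable def probes (n : ℕ) (π : ℕ → ℕ) : ℕ :=
  n + ∑ c ∈ Finset.Icc 1 n, (spot π c - π c)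

/-- The number of lucky cars of `π`: cars parking at their preferred spot. -/
noncomputable def lucky (n : ℕ) (π : ℕ → ℕ) : ℕ :=
  ((Finset.Icc 1 n).filter fun c => spot π c = π c).card

/-- The number of `1`s in `π`. -/
def ones (n : ℕ) (π : ℕ → ℕ) : ℕ :=
  ((Finset.Icc 1 n).filter fun c => π c = 1).card

/-- The multiplicity of the value `v` in the parking function `π`. -/
def multIn (n : ℕ) (π : ℕ → ℕ) (v : ℕ) : ℕ :=
  ((Finset.Icc 1 n).filter fun c => π c = v).card

/-- The multiplicity sequence: `multSeq n π j` is the number of values in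
`{1,…,n+1}` appearing exactly `j` times in `π`. -/
def multSeq (n : ℕ) (π : ℕ → ℕ) (j : ℕ) : ℕ :=
  ((Finset.Icc 1 (n + 1)).filter fun v => multIn n π v = j).card

/-- The tree is a path graph with endpoints `0` and `n`: every vertex has at most
one child and `n` is the (unique) leaf. -/
def IsPathTree (n : ℕ) (f : ℕ → ℕ) : Prop :=
  (∀ v, v ≤ n → numChildren n f v ≤ 1) ∧ numChildren n f n = 0

/-- `g` is the parent map of a rooted forest on `{1,…,n}` rooted at `{1,…,k}`:
the vertices `1,…,k` are roots (fixed points), every other vertex of `{1,…,n}` has a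
parent in `{1,…,n}`, every vertex reaches one of the roots under iteration, and `g`
is pinned to `0` outside `{1,…,n}`. -/
def IsForestRootedAt (n k : ℕ) (g : ℕ → ℕ) : Prop :=
  (∀ i, 1 ≤ i → i ≤ k → g i = i) ∧
  (∀ i, k < i → i ≤ n → 1 ≤ g i ∧ g i ≤ n) ∧
  (∀ i, 1 ≤ i → i ≤ n → ∃ m, 1 ≤ g^[m] i ∧ g^[m] i ≤ k) ∧
  (∀ i, i = 0 ∨ n < i → g i = 0)

open Set

variable {n : ℕ} {f ω pos π : ℕ → ℕ}

lemma injOn_of_lt_imp_ne {α β : Type*} [LinearOrder α] {s : Set α} {g : α → β}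
    (h : ∀ a ∈ s, ∀ b ∈ s, a < b → g a ≠ g b) : InjOn g s :=
  injOn_iff_injective.2 (.of_lt_imp_ne fun a b hab => h a a.2 b b.2 hab)

lemma mapsTo_and_invOn_of_leftInvOn {α : Type*} {s : Set α} {f g : α → α} (hs : s.Finite)
    (hf : MapsTo f s s) (hg : LeftInvOn g f s) : MapsTo g s s ∧ InvOn g f s s := by
  have hbij : BijOn f s s := (hs.injOn_iff_bijOn_of_mapsTo hf).1 hg.injOn
  have hmaps : MapsTo g s s := hg.mapsTo hbij.surjOn
  exact ⟨hmaps, hg, fun v hv => by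
    obtain ⟨i, hi, rfl⟩ := hbij.surjOn hv
    rw [hg hi]⟩

lemma mem_image_Iic_iff_of_invOn {α β : Type*} [Preorder α] {g : α → β} {g' : β → α} {a b : α}
    {t : Set β} {y : β} (hg : InvOn g' g (Iic b) t) (ha : a ≤ b) (hy : y ∈ t) :
    y ∈ g '' Iic a ↔ g' y ≤ a := by
  constructor
  · rintro ⟨x, hx, rfl⟩
    rwa [hg.1 (Iic_subset_Iic.2 ha hx)]
  · exact fun hle => ⟨g' y, hle, hg.2 hy⟩

/-! ### Priority orders -/

/-- The vertices that a search of the tree `f` listing vertices in the order `ω` may visit next,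
after it has visited `ω 0, …, ω i`. -/
def frontier (n : ℕ) (f ω : ℕ → ℕ) (i : ℕ) : Set ℕ :=
  {v ∈ Icc 1 n | v ∉ ω '' Iic i ∧ f v ∈ ω '' Iic i}

/-- `ω` lists the vertices of the tree `f` on `{0, …, n}` in a priority order, and `pos` is the
inverse of `ω`: parents precede their children, and only vertices smaller than `v` are listed
strictly between `f v` and `v`. Carrying `pos` along makes the notion apply both to `ω_T` and to
`ω_π`, whose inverses are defined differently. -/
structure IsPriorityOrder (n : ℕ) (f ω pos : ℕ → ℕ) : Prop where
  parent_zero : f 0 = 0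
  mapsTo_parent : MapsTo f (Iic n) (Iic n)
  apply_zero : ω 0 = 0
  mapsTo : MapsTo ω (Iic n) (Iic n)
  mapsTo_pos : MapsTo pos (Iic n) (Iic n)
  invOn : InvOn pos ω (Iic n) (Iic n)
  pos_parent_lt : ∀ v ∈ Icc 1 n, pos (f v) < pos v
  apply_lt : ∀ v ∈ Icc 1 n, ∀ s ∈ Ioo (pos (f v)) (pos v), ω s < v

lemma mem_frontier_iff (hω : InvOn pos ω (Iic n) (Iic n)) (hf : MapsTo f (Iic n) (Iic n)) {i v : ℕ}
    (hi : i ≤ n) (hv : v ∈ Icc 1 n) : v ∈ frontier n f ω i ↔ i ∈ Ico (pos (f v)) (pos v) := by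
  simp only [frontier, mem_ofPred_eq, hv, true_and, mem_image_Iic_iff_of_invOn hω hi hv.2,
    mem_image_Iic_iff_of_invOn hω hi (hf hv.2), not_le, mem_Ico, and_comm]

lemma frontier_congr {ω' : ℕ → ℕ} {i : ℕ} (h : EqOn ω ω' (Iic i)) :
    frontier n f ω i = frontier n f ω' i := by
  rw [frontier, frontier, h.image_eq]

lemma injOn_of_mem_frontier (h : ∀ i < n, ω (i + 1) ∈ frontier n f ω i) : InjOn ω (Iic n) := by
  refine injOn_of_lt_imp_ne fun i _ j hj hij heq => ?_
  obtain ⟨j, rfl⟩ := Nat.exists_eq_succ_of_ne_zero (Nat.ne_zero_of_lt hij)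
  exact (h j hj).2.1 ⟨i, Nat.lt_succ_iff.1 hij, heq⟩

lemma mapsTo_of_mem_frontier (h0 : ω 0 = 0) (h : ∀ i < n, ω (i + 1) ∈ frontier n f ω i) :
    MapsTo ω (Iic n) (Iic n) := by
  rintro (_ | i) hi
  · exact h0.trans_le (Nat.zero_le n)
  · exact (h i hi).1.2

namespace IsPriorityOrder

lemma of_isLeast_frontier (hf0 : f 0 = 0) (hf : MapsTo f (Iic n) (Iic n)) (hω0 : ω 0 = 0)
    (hpos : LeftInvOn pos ω (Iic n)) (h : ∀ i < n, IsLeast (frontier n f ω i) (ω (i + 1))) :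
    IsPriorityOrder n f ω pos := by
  have hmaps := mapsTo_of_mem_frontier hω0 fun i hi => (h i hi).1
  obtain ⟨hmaps', hinv⟩ := mapsTo_and_invOn_of_leftInvOn (finite_Iic n) hmaps hpos
  refine ⟨hf0, hf, hω0, hmaps, hmaps', hinv, fun v hv => ?_, fun v hv s hs => ?_⟩
  · have hωv : ω (pos v) = v := hinv.2 hv.2
    obtain ⟨i, hi⟩ : ∃ i, pos v = i + 1 := by
      refine Nat.exists_eq_succ_of_ne_zero fun h0 => ?_
      rw [h0, hω0] at hωv
      exact Nat.ne_of_gt hv.1 hωv.symm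
    have hin : i + 1 ≤ n := hi ▸ hmaps' hv.2
    have hmem := (h i hin).1
    rw [← hi, hωv, mem_frontier_iff hinv hf (Nat.le_of_lt hin) hv] at hmem
    exact hmem.1.trans_lt hmem.2
  · obtain ⟨s, rfl⟩ := Nat.exists_eq_succ_of_ne_zero (Nat.ne_zero_of_lt hs.1)
    have hsn : s < n := (Nat.lt_succ_self s).trans (hs.2.trans_le (hmaps' hv.2))
    have hvf : v ∈ frontier n f ω s :=
      (mem_frontier_iff hinv hf hsn.le hv).2
        ⟨Nat.lt_succ_iff.1 hs.1, (Nat.lt_succ_self s).trans hs.2⟩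
    refine ((h s hsn).2 hvf).lt_of_ne fun heq => hs.2.ne ?_
    rw [← heq, hinv.1 (show s + 1 ≤ n from hsn)]

variable (h : IsPriorityOrder n f ω pos)
include h

lemma pos_zero : pos 0 = 0 := by
  simpa only [h.apply_zero] using h.invOn.1 (Nat.zero_le n)

lemma apply_mem_Icc {i : ℕ} (hi : i ∈ Icc 1 n) : ω i ∈ Icc 1 n := by
  refine ⟨Nat.one_le_iff_ne_zero.2 fun h0 => ?_, h.mapsTo hi.2⟩
  have hpos := h.invOn.1 hi.2
  rw [h0, h.pos_zero] at hpos
  exact Nat.ne_of_gt hi.1 hpos.symm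

lemma isLeast_frontier {i : ℕ} (hi : i < n) : IsLeast (frontier n f ω i) (ω (i + 1)) := by
  have hpos : pos (ω (i + 1)) = i + 1 := h.invOn.1 hi
  have hmem := h.apply_mem_Icc ⟨Nat.le_add_left 1 i, hi⟩
  constructor
  · have hlt := h.pos_parent_lt _ hmem
    exact (mem_frontier_iff h.invOn h.mapsTo_parent hi.le hmem).2 ⟨by omega, by omega⟩
  · intro v hv
    obtain ⟨hle, hlt⟩ := (mem_frontier_iff h.invOn h.mapsTo_parent hi.le hv.1).1 hv
    rcases (Nat.succ_le_of_lt hlt).eq_or_lt with heq | hlt'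
    · rw [show i + 1 = pos v from heq, h.invOn.2 hv.1.2]
    · exact (h.apply_lt v hv.1 (i + 1) ⟨Nat.lt_succ_of_le hle, hlt'⟩).le

lemma pos_iterate_le {v : ℕ} (hv : v ≤ n) (k : ℕ) : pos (f^[k] v) ≤ pos v := by
  induction k generalizing v with
  | zero => exact le_rfl
  | succ k ih =>
    rw [Function.iterate_succ_apply]
    refine (ih (h.mapsTo_parent hv)).trans ?_
    rcases Nat.eq_zero_or_pos v with rfl | hv0
    · rw [h.parent_zero]
    · exact (h.pos_parent_lt v ⟨hv0, hv⟩).le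

lemma isCayleyTree (hf : ∀ v, n < v → f v = 0) : IsCayleyTree n f := by
  refine ⟨h.parent_zero, hf, fun v _ h2 => h.mapsTo_parent h2, fun v h1 h2 => ?_⟩
  induction hs : pos v using Nat.strong_induction_on generalizing v with
  | _ s ih =>
    rcases Nat.eq_zero_or_pos (f v) with h0 | h0
    · exact ⟨1, h0⟩
    · obtain ⟨k, hk⟩ := ih _ (hs ▸ h.pos_parent_lt v ⟨h1, h2⟩) _ h0 (h.mapsTo_parent h2) rfl
      exact ⟨k + 1, hk⟩

/-! ### Records along a priority order -/

lemma apply_le_of_iterate_le {v w : ℕ} (hw : w ≤ n) (hv : ∀ k, f^[k] w ≤ v) {j : ℕ}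
    (hj : j ≤ pos w) : ω j ≤ v := by
  induction hs : pos w using Nat.strong_induction_on generalizing w with
  | _ s ih =>
    rcases hj.eq_or_lt with rfl | hlt
    · rw [h.invOn.2 hw]
      exact hv 0
    have hw' : w ∈ Icc 1 n := by
      refine ⟨Nat.one_le_iff_ne_zero.2 ?_, hw⟩
      rintro rfl
      exact Nat.not_lt_zero j (h.pos_zero ▸ hlt)
    rcases Nat.lt_or_ge (pos (f w)) j with hgt | hle
    · exact (h.apply_lt w hw' j ⟨hgt, hlt⟩).le.trans (hv 0)
    · exact ih _ (hs ▸ h.pos_parent_lt w hw') (h.mapsTo_parent hw) (fun k => hv (k + 1)) hle rfl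

theorem isRecord_iff {v : ℕ} : IsRecord n f v ↔ v ∈ Icc 1 n ∧ ∀ j < pos v, ω j < v := by
  rw [IsRecord, ← and_assoc]
  refine and_congr_right fun hv => ⟨fun hrec j hj => ?_, fun hmax k hk => ?_⟩
  · have hanc : ∀ k, f^[k] v ≤ v
      | 0 => le_rfl
      | k + 1 => (hrec (k + 1) (Nat.le_add_left 1 k)).le
    refine (h.apply_le_of_iterate_le hv.2 hanc hj.le).lt_of_ne fun heq => hj.ne ?_
    rw [← heq, h.invOn.1 (hj.le.trans (h.mapsTo_pos hv.2))]
  · obtain ⟨k, rfl⟩ := Nat.exists_eq_succ_of_ne_zero (Nat.one_le_iff_ne_zero.1 hk)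
    have hpos : pos (f^[k + 1] v) < pos v :=
      (h.pos_iterate_le (h.mapsTo_parent hv.2) k).trans_lt (h.pos_parent_lt v hv)
    simpa only [h.invOn.2 (h.mapsTo_parent.iterate (k + 1) hv.2)] using hmax _ hpos

end IsPriorityOrder

/-! ### Priority-first search -/

lemma wearyList_length (n : ℕ) (f : ℕ → ℕ) (i : ℕ) : (wearyList n f i).length = i + 1 := by
  induction i with
  | zero => rfl
  | succ i ih => rw [wearyList, List.length_append, ih, List.length_singleton]

lemma wearyList_prefix (n : ℕ) (f : ℕ → ℕ) {i j : ℕ} (h : i ≤ j) :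
    wearyList n f i <+: wearyList n f j := by
  induction j, h using Nat.le_induction with
  | base => exact List.prefix_rfl
  | succ j _ ih => exact List.prefix_append_of_prefix ih

lemma wearyList_getElem {i j : ℕ} (hi : i ≤ n) (hj : j < (wearyList n f i).length) :
    (wearyList n f i)[j] = weary n f j := by
  have hprefix := wearyList_prefix n f hi
  rw [weary, List.getD_eq_getElem _ _ (hj.trans_le hprefix.length_le), hprefix.getElem]

lemma mem_wearyList {i v : ℕ} (hi : i ≤ n) : v ∈ wearyList n f i ↔ v ∈ weary n f '' Iic i := by
  simp only [List.mem_iff_getElem, wearyList_getElem hi, wearyList_length, Nat.lt_succ_iff,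
    exists_prop, mem_image, mem_Iic]

lemma weary_zero (n : ℕ) (f : ℕ → ℕ) : weary n f 0 = 0 :=
  (wearyList_getElem (Nat.zero_le n) Nat.zero_lt_one).symm

lemma weary_succ {i : ℕ} (hi : i < n) : weary n f (i + 1) = sInf (frontier n f (weary n f) i) := by
  have hlen := wearyList_length n f
  rw [← wearyList_getElem (i := i + 1) hi (by rw [hlen]; exact Nat.lt_succ_self _)]
  simp only [wearyList, List.getElem_append_right, hlen, le_refl, List.getElem_singleton,
    mem_wearyList hi.le, frontier, mem_Icc, and_assoc]

lemma leftInvOn_wearyInv (h : InjOn (weary n f) (Iic n)) :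
    LeftInvOn (wearyInv n f) (weary n f) (Iic n) := by
  intro i hi
  have hleast : IsLeast {j | weary n f j = weary n f i} (wearyInv n f (weary n f i)) :=
    isLeast_csInf ⟨i, rfl⟩
  exact h ((hleast.2 rfl).trans hi) hi hleast.1

lemma IsCayleyTree.mapsTo (h : IsCayleyTree n f) : MapsTo f (Iic n) (Iic n) := by
  intro v hv
  rcases Nat.eq_zero_or_pos v with rfl | hv0
  · exact h.1.trans_le (Nat.zero_le n)
  · exact h.2.2.1 v hv0 hv

/-- An unvisited vertex exists by counting, and its path to the root enters the visited set. -/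
lemma IsCayleyTree.frontier_nonempty (h : IsCayleyTree n f) (hω0 : ω 0 = 0) {i : ℕ} (hi : i < n) :
    (frontier n f ω i).Nonempty := by
  have h0 : 0 ∈ ω '' Iic i := ⟨0, Nat.zero_le i, hω0⟩
  have one_le {v : ℕ} (hv : v ∉ ω '' Iic i) : 1 ≤ v :=
    Nat.one_le_iff_ne_zero.2 (ne_of_mem_of_not_mem h0 hv).symm
  obtain ⟨v, hvn, hv⟩ : ∃ v ∈ Finset.Iic n, v ∉ (Finset.Iic i).image ω := by
    refine Finset.exists_mem_notMem_of_card_lt_card (Finset.card_image_le.trans_lt ?_)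
    simpa only [Nat.card_Iic, Nat.succ_lt_succ_iff] using hi
  rw [Finset.mem_Iic] at hvn
  rw [← Finset.mem_coe, Finset.coe_image, Finset.coe_Iic] at hv
  obtain ⟨k, hk⟩ := h.2.2.2 v (one_le hv) hvn
  obtain ⟨m, hm, hm'⟩ := Nat.exists_not_and_succ_of_not_zero_of_exists
    (p := fun k => f^[k] v ∈ ω '' Iic i) hv ⟨k, hk ▸ h0⟩
  rw [Function.iterate_succ_apply'] at hm'
  exact ⟨f^[m] v, ⟨one_le hm, h.mapsTo.iterate m hvn⟩, hm, hm'⟩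

theorem IsCayleyTree.isPriorityOrder (h : IsCayleyTree n f) :
    IsPriorityOrder n f (weary n f) (wearyInv n f) := by
  have hleast : ∀ i < n, IsLeast (frontier n f (weary n f) i) (weary n f (i + 1)) := fun i hi => by
    rw [weary_succ hi]
    exact isLeast_csInf (h.frontier_nonempty (weary_zero n f) hi)
  exact .of_isLeast_frontier h.1 h.mapsTo (weary_zero n f)
    (leftInvOn_wearyInv (injOn_of_mem_frontier fun i hi => (hleast i hi).1)) hleast

theorem IsPriorityOrder.eqOn_weary (h : IsPriorityOrder n f ω pos) :
    EqOn (weary n f) ω (Iic n) := by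
  intro i hi
  induction i using Nat.strong_induction_on with
  | _ i ih =>
    rcases i with _ | i
    · rw [weary_zero, h.apply_zero]
    · have hlt : i < n := hi
      have heq : EqOn (weary n f) ω (Iic i) := fun j (hj : j ≤ i) =>
        ih j (Nat.lt_succ_of_le hj) (hj.trans hlt.le)
      rw [weary_succ hlt, frontier_congr heq, (h.isLeast_frontier hlt).csInf_eq]

theorem IsPriorityOrder.eqOn_wearyInv (h : IsPriorityOrder n f ω pos) :
    EqOn (wearyInv n f) pos (Iic n) := by
  have hinj : InjOn (weary n f) (Iic n) := h.invOn.1.injOn.congr h.eqOn_weary.symm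
  intro v hv
  calc wearyInv n f v = wearyInv n f (weary n f (pos v)) := by
        rw [h.eqOn_weary (h.mapsTo_pos hv), h.invOn.2 hv]
    _ = pos v := leftInvOn_wearyInv hinj (h.mapsTo_pos hv)

/-! ### The parking process -/

lemma spotList_length (π : ℕ → ℕ) (c : ℕ) : (spotList π c).length = c := by
  induction c with
  | zero => rfl
  | succ c ih => rw [spotList, List.length_append, ih, List.length_singleton]

lemma spot_zero (π : ℕ → ℕ) : spot π 0 = 0 := rfl

lemma spot_succ (π : ℕ → ℕ) (c : ℕ) :
    spot π (c + 1) = sInf {s | π (c + 1) ≤ s ∧ s ∉ spotList π c} := by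
  simp only [spot, spotList, Nat.add_sub_cancel, List.getD_append_right, spotList_length, le_refl,
    Nat.sub_self, List.getD_cons_zero]

lemma mem_spotList {c s : ℕ} : s ∈ spotList π c ↔ s ∈ spot π '' Icc 1 c := by
  induction c with
  | zero => simp [spotList]
  | succ c ih =>
    rw [spotList, ← spot_succ, List.mem_append, ih, List.mem_singleton,
      ← insert_Icc_right_eq_Icc_add_one (Nat.le_add_left 1 c), image_insert_eq, mem_insert_iff,
      or_comm]

lemma spot_eq_sInf {c : ℕ} (hc : 1 ≤ c) :
    spot π c = sInf {s | π c ≤ s ∧ s ∉ spot π '' Ico 1 c} := by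
  obtain ⟨c, rfl⟩ := Nat.exists_eq_add_of_le' hc
  simp only [spot_succ, mem_spotList, Ico_add_one_right_eq_Icc]

lemma isLeast_spot {c : ℕ} (hc : 1 ≤ c) :
    IsLeast {s | π c ≤ s ∧ s ∉ spot π '' Ico 1 c} (spot π c) := by
  rw [spot_eq_sInf hc]
  exact isLeast_csInf ((Ici_infinite (π c)).exists_notMem_finite ((finite_Ico 1 c).image _))

lemma injOn_spot (π : ℕ → ℕ) : InjOn (spot π) (Ici 1) :=
  injOn_of_lt_imp_ne fun b hb _ hc hbc heq => (isLeast_spot hc).1.2 ⟨b, ⟨hb, hbc⟩, heq⟩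

lemma birdsEye_zero (n : ℕ) (π : ℕ → ℕ) : birdsEye n π 0 = 0 := if_pos rfl

lemma birdsEye_spot {c : ℕ} (hc : c ∈ Icc 1 n) (hs : spot π c ≠ 0) :
    birdsEye n π (spot π c) = c := by
  have hmem : birdsEye n π (spot π c) ∈ {d | 1 ≤ d ∧ d ≤ n ∧ spot π d = spot π c} := by
    rw [birdsEye, if_neg hs]
    exact csInf_mem ⟨c, hc.1, hc.2, rfl⟩
  exact injOn_spot π hmem.1 hc.1 hmem.2.2

/-! ### The parking tree -/

lemma ptParent_of_mem {v : ℕ} (hv : v ∈ Icc 1 n) : ptParent n π v = birdsEye n π (π v - 1) :=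
  if_pos hv

lemma ptParent_of_notMem {v : ℕ} (hv : v ∉ Icc 1 n) : ptParent n π v = 0 :=
  if_neg hv

namespace IsParkingFun

variable (h : IsParkingFun n π)
include h

lemma spot_pos {c : ℕ} (hc : c ∈ Icc 1 n) : 0 < spot π c :=
  (h.1 c hc.1 hc.2).1.trans (isLeast_spot hc.1).1.1

lemma mapsTo_spot : MapsTo (spot π) (Iic n) (Iic n) := by
  intro c hc
  rcases Nat.eq_zero_or_pos c with rfl | hc0
  · exact hc
  · exact h.2.2 c hc0 hc

lemma leftInvOn_birdsEye : LeftInvOn (birdsEye n π) (spot π) (Iic n) := by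
  intro c hc
  rcases Nat.eq_zero_or_pos c with rfl | hc0
  · rw [spot_zero, birdsEye_zero]
  · exact birdsEye_spot ⟨hc0, hc⟩ (h.spot_pos ⟨hc0, hc⟩).ne'

lemma mapsTo_birdsEye_and_invOn :
    MapsTo (birdsEye n π) (Iic n) (Iic n) ∧ InvOn (birdsEye n π) (spot π) (Iic n) (Iic n) :=
  mapsTo_and_invOn_of_leftInvOn (finite_Iic n) h.mapsTo_spot h.leftInvOn_birdsEye

lemma ptParent_le (c : ℕ) : ptParent n π c ≤ n := by
  by_cases hc : c ∈ Icc 1 n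
  · rw [ptParent_of_mem hc]
    exact h.mapsTo_birdsEye_and_invOn.1 ((Nat.sub_le _ _).trans (h.1 c hc.1 hc.2).2)
  · exact (ptParent_of_notMem hc).trans_le (Nat.zero_le n)

lemma spot_ptParent_add_one {c : ℕ} (hc : c ∈ Icc 1 n) : spot π (ptParent n π c) + 1 = π c := by
  obtain ⟨h1, h2⟩ := h.1 c hc.1 hc.2
  rw [ptParent_of_mem hc, h.mapsTo_birdsEye_and_invOn.2.2 ((Nat.sub_le _ _).trans h2),
    Nat.sub_add_cancel h1]

theorem isPriorityOrder : IsPriorityOrder n (ptParent n π) (birdsEye n π) (spot π) := by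
  obtain ⟨hmaps, hinv⟩ := h.mapsTo_birdsEye_and_invOn
  refine ⟨ptParent_of_notMem fun h0 => absurd h0.1 (by decide), fun c _ => h.ptParent_le c,
    birdsEye_zero n π, hmaps, h.mapsTo_spot, hinv.symm, fun c hc => ?_, fun c hc s hs => ?_⟩
  · exact Nat.lt_of_succ_le ((h.spot_ptParent_add_one hc).trans_le (isLeast_spot hc.1).1.1)
  · obtain ⟨d, hd, rfl⟩ : s ∈ spot π '' Ico 1 c := by
      by_contra hfree
      have hπs : π c ≤ s := (h.spot_ptParent_add_one hc).symm.trans_le hs.1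
      exact hs.2.not_ge ((isLeast_spot hc.1).2 ⟨hπs, hfree⟩)
    rw [h.leftInvOn_birdsEye (show d ≤ n from hd.2.le.trans hc.2)]
    exact hd.2

end IsParkingFun

namespace IsPriorityOrder

variable (h : IsPriorityOrder n f ω pos) (hπ : ∀ c ∈ Icc 1 n, π c = pos (f c) + 1)
include h hπ

theorem eqOn_spot : EqOn (spot π) pos (Iic n) := by
  intro c hc
  induction c using Nat.strong_induction_on with
  | _ c ih =>
    rcases Nat.eq_zero_or_pos c with rfl | hc0
    · rw [spot_zero, h.pos_zero]
    have hcn : c ∈ Icc 1 n := ⟨hc0, hc⟩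
    have heq : EqOn (spot π) pos (Ico 1 c) := fun d hd => ih d hd.2 (hd.2.le.trans hc)
    rw [spot_eq_sInf hc0, heq.image_eq]
    refine IsLeast.csInf_eq ⟨⟨(hπ c hcn).trans_le (h.pos_parent_lt c hcn), ?_⟩, ?_⟩
    · rintro ⟨d, hd, hdc⟩
      exact hd.2.ne (h.invOn.2.injOn (hd.2.le.trans hc) hc hdc)
    · rintro s ⟨hs, hfree⟩
      by_contra! hlt
      have hs' : pos (f c) < s := (hπ c hcn).symm.trans_le hs
      have hsn : s ≤ n := hlt.le.trans (h.mapsTo_pos hc)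
      have hωs := h.apply_mem_Icc ⟨Nat.one_le_of_lt hs', hsn⟩
      exact hfree ⟨ω s, ⟨hωs.1, h.apply_lt c hcn s ⟨hs', hlt⟩⟩, h.invOn.1 hsn⟩

theorem eqOn_birdsEye : EqOn (birdsEye n π) ω (Iic n) := by
  intro i hi
  rcases Nat.eq_zero_or_pos i with rfl | hi0
  · rw [birdsEye_zero, h.apply_zero]
  have hmem := h.apply_mem_Icc ⟨hi0, hi⟩
  have hspot : spot π (ω i) = i := (h.eqOn_spot hπ hmem.2).trans (h.invOn.1 hi)
  simpa only [hspot] using birdsEye_spot hmem (hspot.trans_ne hi0.ne')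

lemma isParkingFun (hπ1 : ∀ c, c = 0 ∨ n < c → π c = 1) : IsParkingFun n π := by
  refine ⟨fun c h1 h2 => ?_, hπ1, fun c _ h2 => ?_⟩
  · rw [hπ c ⟨h1, h2⟩]
    exact ⟨Nat.le_add_left 1 _, (h.pos_parent_lt c ⟨h1, h2⟩).trans_le (h.mapsTo_pos h2)⟩
  · rw [h.eqOn_spot hπ h2]
    exact h.mapsTo_pos h2

lemma ptParent_apply {c : ℕ} (hc : c ∈ Icc 1 n) : ptParent n π c = f c := by
  have hfc := h.mapsTo_parent hc.2
  rw [ptParent_of_mem hc, hπ c hc, Nat.add_sub_cancel, h.eqOn_birdsEye hπ (h.mapsTo_pos hfc),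
    h.invOn.2 hfc]

end IsPriorityOrder

/-! ### The bijection -/

theorem IsParkingFun.isCayleyTree_ptParent (h : IsParkingFun n π) :
    IsCayleyTree n (ptParent n π) :=
  h.isPriorityOrder.isCayleyTree fun _ hv => ptParent_of_notMem fun hv' => hv.not_ge hv'.2

theorem IsParkingFun.pref_ptParent (h : IsParkingFun n π) : pref n (ptParent n π) = π := by
  funext c
  rw [pref, h.isPriorityOrder.eqOn_wearyInv (h.ptParent_le c)]
  by_cases hc : c ∈ Icc 1 n
  · rw [h.spot_ptParent_add_one hc]
  · rw [ptParent_of_notMem hc, spot_zero, h.2.1 c (by rw [mem_Icc] at hc; omega)]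

theorem IsCayleyTree.apply_of_notMem (h : IsCayleyTree n f) {v : ℕ} (hv : v ∉ Icc 1 n) :
    f v = 0 := by
  rcases Nat.eq_zero_or_pos v with rfl | hv0
  · exact h.1
  · exact h.2.1 v (not_le.1 fun hvn => hv ⟨hv0, hvn⟩)

theorem IsCayleyTree.isParkingFun_pref (h : IsCayleyTree n f) : IsParkingFun n (pref n f) := by
  refine h.isPriorityOrder.isParkingFun (fun _ _ => rfl) fun c hc => ?_
  rw [pref, h.apply_of_notMem (by rw [mem_Icc]; omega), h.isPriorityOrder.pos_zero]

theorem IsCayleyTree.ptParent_pref (h : IsCayleyTree n f) : ptParent n (pref n f) = f := by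
  funext c
  by_cases hc : c ∈ Icc 1 n
  · exact h.isPriorityOrder.ptParent_apply (fun _ _ => rfl) hc
  · rw [ptParent_of_notMem hc, h.apply_of_notMem hc]

theorem IsParkingFun.isPfRecord_iff (h : IsParkingFun n π) {v : ℕ} :
    IsPfRecord n π v ↔ v ∈ Icc 1 n ∧ ∀ j < spot π v, birdsEye n π j < v := by
  have hω := h.isPriorityOrder
  constructor
  · rintro ⟨i, h1, h2, rfl, hmax⟩
    have hmem := hω.apply_mem_Icc ⟨h1, h2⟩
    refine ⟨hmem, fun j hj => ?_⟩
    rw [hω.invOn.1 h2] at hj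
    rcases Nat.eq_zero_or_pos j with rfl | hj0
    · rw [birdsEye_zero]
      exact hmem.1
    · exact hmax j hj0 hj
  · rintro ⟨hv, hmax⟩
    exact ⟨spot π v, h.spot_pos hv, h.mapsTo_spot hv.2, hω.invOn.2 hv.2, fun j _ => hmax j⟩

theorem IsParkingFun.isRecord_ptParent_iff (h : IsParkingFun n π) {v : ℕ} :
    IsRecord n (ptParent n π) v ↔ IsPfRecord n π v :=
  h.isPriorityOrder.isRecord_iff.trans h.isPfRecord_iff.symm

/-- The map `π ↦ PT(π)` is a record-preserving bijection from
parking functions of length `n` onto Cayley trees labelled with `[n]₀`, with inverse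
`T ↦ π_T`. -/
theorem stmt14 (n : ℕ) :
    (∀ π : ℕ → ℕ, IsParkingFun n π → IsCayleyTree n (ptParent n π)) ∧
    (∀ f : ℕ → ℕ, IsCayleyTree n f → IsParkingFun n (pref n f)) ∧
    (∀ π : ℕ → ℕ, IsParkingFun n π → pref n (ptParent n π) = π) ∧
    (∀ f : ℕ → ℕ, IsCayleyTree n f → ptParent n (pref n f) = f) ∧
    Set.BijOn (fun π => ptParent n π)
      {π : ℕ → ℕ | IsParkingFun n π} {f : ℕ → ℕ | IsCayleyTree n f} ∧
    (∀ π : ℕ → ℕ, IsParkingFun n π →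
      ∀ v, IsRecord n (ptParent n π) v ↔ IsPfRecord n π v) := by
  refine ⟨fun _ h => h.isCayleyTree_ptParent, fun _ h => h.isParkingFun_pref,
    fun _ h => h.pref_ptParent, fun _ h => h.ptParent_pref, ?_,
    fun _ h _ => h.isRecord_ptParent_iff⟩
  have hinv : InvOn (pref n) (ptParent n) {π | IsParkingFun n π} {f | IsCayleyTree n f} :=
    ⟨fun _ h => h.pref_ptParent, fun _ h => h.ptParent_pref⟩
  exact hinv.bijOn (fun _ h => h.isCayleyTree_ptParent) fun _ h => h.isParkingFun_pref

end WearyParking
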